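/- Theorem 1 (full-state attitude observer with guaranteed performance, noise-free measurements): Let J ∈ ℝ^{3×3} be symmetric positive definite and let ℓ_o > 0, k_o ≥ ℓ_o, γ_o > 0, ξ_o⁰ > ξ_o^∞ > 0, δ_o > 0. Let Q, Q̂ : [0,∞) → S³ and Ω, Ω̂, τ : [0,∞) → ℝ³ be differentiable and satisfy the true dynamics Q̇ = ½ Q⊙(0,Ω), J Ω̇ = (JΩ)×Ω + τ, and the observer dynamics Q̂̇ = ½ Q̂⊙(0, Ω̂ + W_Ω), Ĵ Ω̂̇ = (Ĵ Ω̂)×Ω̂ + τ̂ + Ĵ(Ω̂ × W_Ω) + W_τ, where Q̃_o = Q̂⁻¹⊙Q = (q̃_{o0}, q̃_o), Ĵ = R_{Q̃_o} J R_{Q̃_o}ᵀ, τ̂ = R_{Q̃_o} τ, e_o = 1 − q̃_{o0}, ξ_o(t) = (ξ_o⁰ − ξ_o^∞)exp(−ℓ_o t) + ξ_o^∞, E_o = ½ ln((δ_o + e_o/ξ_o)/(δ_o − e_o/ξ_o)), Δ_o = (1/(2ξ_o))(1/(δ_o + e_o/ξ_o) + 1/(δ_o − e_o/ξ_o)), W_Ω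 = −k_o(E_oΔ_o + 1) R_{Q̃_o} q̃_o, W_τ = −γ_o(E_oΔ_o + 1) R_{Q̃_o} q̃_o. Assume Ω is bounded on [0,∞), δ_o > e_o(0), ξ_o⁰ > e_o(0), and that for all t ≥ 0 one has q̃_{o0}(t) ≥ 0 and 0 ≤ e_o(t) < δ_o ξ_o(t). Then: (1) E_o, e_o and Ω̂ are bounded on [0,∞); and (2) E_o(t) → 0, e_o(t) → 0, q̃_o(t) → 0 ∈ ℝ³, q̃_{o0}(t) → 1, and the angular-velocity estimation error Ω̃_o(t) = Ω(t) − R_{Q̃_o(t)}ᵀ Ω̂(t) → 0 as t → ∞. -/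

import Mathlib

open Matrix Filter

noncomputable section

abbrev V3 := Fin 3 → ℝ
abbrev Quat4 := ℝ × V3

/-- Quaternion product `Q₁ ⊙ Q₂`. -/
def qmul (p q : Quat4) : Quat4 :=
  (p.1 * q.1 - p.2 ⬝ᵥ q.2, p.1 • q.2 + q.1 • p.2 + crossProduct p.2 q.2)

/-- Quaternion inverse (conjugate) of a unit quaternion. -/
def qinv (p : Quat4) : Quat4 := (p.1, -p.2)

/-- Pure quaternion `(0, v)`. -/
def qpure (v : V3) : Quat4 := ((0 : ℝ), v)

/-- `Q ∈ S³`. -/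
def isUnitQuat (p : Quat4) : Prop := p.1 ^ 2 + p.2 ⬝ᵥ p.2 = 1

/-- Skew symmetric matrix `[v]ₓ` with `skewM v *ᵥ y = v ×₃ y`. -/
def skewM (v : V3) : Matrix (Fin 3) (Fin 3) ℝ :=
  !![0, -v 2, v 1; v 2, 0, -v 0; -v 1, v 0, 0]

/-- Rotation matrix `R_Q` associated with a unit quaternion. -/
def rotQ (p : Quat4) : Matrix (Fin 3) (Fin 3) ℝ :=
  (p.1 ^ 2 - p.2 ⬝ᵥ p.2) • (1 : Matrix (Fin 3) (Fin 3) ℝ)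
    + (2 : ℝ) • vecMulVec p.2 p.2 + (2 * p.1) • skewM p.2

/-- Euclidean norm on ℝ³. -/
def vnorm (v : V3) : ℝ := Real.sqrt (v ⬝ᵥ v)

/-- Quaternion norm. -/
def qnorm (p : Quat4) : ℝ := Real.sqrt (p.1 ^ 2 + p.2 ⬝ᵥ p.2)

/-- `S(Ω) = [JΩ]ₓ − J[Ω]ₓ − [Ω]ₓJ`. -/
def Smat (J : Matrix (Fin 3) (Fin 3) ℝ) (Ω : V3) : Matrix (Fin 3) (Fin 3) ℝ :=
  skewM (J *ᵥ Ω) - J * skewM Ω - skewM Ω * J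


/-! ### Algebra of the rotation matrix of a unit quaternion -/

theorem cross_coord_zero (x y : V3) : crossProduct x y 0 = x 1 * y 2 - x 2 * y 1 := by
  simp [cross_apply]

theorem cross_coord_one (x y : V3) : crossProduct x y 1 = x 2 * y 0 - x 0 * y 2 := by
  simp [cross_apply]

theorem cross_coord_two (x y : V3) : crossProduct x y 2 = x 0 * y 1 - x 1 * y 0 := by
  simp [cross_apply]

/-- The matrix `R_Pᵀ` acts by `x ↦ P⁻¹ ⊙ (0, x) ⊙ P`. -/
theorem rotQ_transpose_mulVec (p : Quat4) (x : V3) :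
    (rotQ p)ᵀ *ᵥ x = (p.1 ^ 2 - p.2 ⬝ᵥ p.2) • x + (2 * (p.2 ⬝ᵥ x)) • p.2
      - (2 * p.1) • crossProduct p.2 x := by
  ext i
  fin_cases i <;>
  · simp [rotQ, skewM, Matrix.mulVec, dotProduct, Fin.sum_univ_three, crossProduct, vecMulVec_apply]
    ring

theorem rotQ_mul_transpose {p : Quat4} (hp : isUnitQuat p) : rotQ p * (rotQ p)ᵀ = 1 := by
  obtain ⟨s, v⟩ := p
  simp only [isUnitQuat, dotProduct, Fin.sum_univ_three] at hp
  have h2 : (s ^ 2 + (v 0 * v 0 + v 1 * v 1 + v 2 * v 2)) ^ 2 = 1 := by rw [hp]; norm_num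
  ext i j
  fin_cases i <;> fin_cases j <;>
  · simp [rotQ, skewM, Matrix.mul_apply, dotProduct, Fin.sum_univ_three, vecMulVec_apply]
    linarith [h2]

theorem rotQ_transpose_mul {p : Quat4} (hp : isUnitQuat p) : (rotQ p)ᵀ * rotQ p = 1 :=
  mul_eq_one_comm.mp (rotQ_mul_transpose hp)

theorem rotQ_mulVec_vec {p : Quat4} (hp : isUnitQuat p) : rotQ p *ᵥ p.2 = p.2 := by
  obtain ⟨s, v⟩ := p
  simp only [isUnitQuat, dotProduct, Fin.sum_univ_three] at hp
  ext i
  fin_cases i <;> simp [rotQ, skewM, Matrix.mulVec, dotProduct, Fin.sum_univ_three, vecMulVec_apply]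
  · linear_combination (v 0) * hp
  · linear_combination (v 1) * hp
  · linear_combination (v 2) * hp

theorem rotQ_transpose_mulVec_vec {p : Quat4} (hp : isUnitQuat p) :
    (rotQ p)ᵀ *ᵥ p.2 = p.2 := by
  conv_lhs => rw [← rotQ_mulVec_vec hp]
  rw [Matrix.mulVec_mulVec, rotQ_transpose_mul hp, Matrix.one_mulVec]

theorem rotQ_transpose_mulVec_cross {p : Quat4} (hp : isUnitQuat p) (x y : V3) :
    (rotQ p)ᵀ *ᵥ crossProduct x y
      = crossProduct ((rotQ p)ᵀ *ᵥ x) ((rotQ p)ᵀ *ᵥ y) := by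
  have homogeneous : (p.1 ^ 2 + p.2 ⬝ᵥ p.2) • ((rotQ p)ᵀ *ᵥ crossProduct x y)
      = crossProduct ((rotQ p)ᵀ *ᵥ x) ((rotQ p)ᵀ *ᵥ y) := by
    simp only [rotQ_transpose_mulVec]
    ext i
    fin_cases i <;>
    · simp only [Fin.mk_one, Fin.zero_eta, Fin.reduceFinMk, Pi.add_apply, Pi.sub_apply,
        Pi.smul_apply, smul_eq_mul, cross_coord_zero, cross_coord_one, cross_coord_two,
        dotProduct, Fin.sum_univ_three]
      ring
  rwa [show p.1 ^ 2 + p.2 ⬝ᵥ p.2 = 1 from hp, one_smul] at homogeneous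

theorem isUnitQuat_qmul_qinv {p q : Quat4} (hp : isUnitQuat p) (hq : isUnitQuat q) :
    isUnitQuat (qmul (qinv p) q) := by
  simp only [isUnitQuat, qmul, qinv, dotProduct, Fin.sum_univ_three, cross_coord_zero,
    cross_coord_one, cross_coord_two, Pi.add_apply, Pi.smul_apply, Pi.neg_apply,
    smul_eq_mul] at *
  linear_combination (q.1 ^ 2 + (q.2 0 * q.2 0 + q.2 1 * q.2 1 + q.2 2 * q.2 2)) * hp + hq

/-! ### Kinematics of the attitude error -/

theorem hasDerivAt_cross {x y : ℝ → V3} {x' y' : V3} {t : ℝ}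
    (hx : HasDerivAt x x' t) (hy : HasDerivAt y y' t) :
    HasDerivAt (fun u => crossProduct (x u) (y u))
      (crossProduct x' (y t) + crossProduct (x t) y') t := by
  have h1 := hasDerivAt_pi.mp hx
  have h2 := hasDerivAt_pi.mp hy
  refine hasDerivAt_pi.mpr fun i => ?_
  fin_cases i <;>
    simp only [Fin.mk_one, Fin.zero_eta, Fin.reduceFinMk, Pi.add_apply,
      cross_coord_zero, cross_coord_one, cross_coord_two]
  · exact (((h1 1).mul (h2 2)).sub ((h1 2).mul (h2 1))).congr_deriv (by ring)
  · exact (((h1 2).mul (h2 0)).sub ((h1 0).mul (h2 2))).congr_deriv (by ring)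
  · exact (((h1 0).mul (h2 1)).sub ((h1 1).mul (h2 0))).congr_deriv (by ring)

theorem hasDerivAt_dotProduct {x y : ℝ → V3} {x' y' : V3} {t : ℝ}
    (hx : HasDerivAt x x' t) (hy : HasDerivAt y y' t) :
    HasDerivAt (fun u => x u ⬝ᵥ y u) (x' ⬝ᵥ y t + x t ⬝ᵥ y') t := by
  have h1 := hasDerivAt_pi.mp hx
  have h2 := hasDerivAt_pi.mp hy
  simp only [dotProduct, Fin.sum_univ_three]
  exact ((((h1 0).mul (h2 0)).add ((h1 1).mul (h2 1))).add ((h1 2).mul (h2 2))).congr_deriv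
    (by ring)

theorem hasDerivAt_scalar_part {p : ℝ → Quat4} {p' : Quat4} {t : ℝ} (hp : HasDerivAt p p' t) :
    HasDerivAt (fun u => (p u).1) p'.1 t :=
  (ContinuousLinearMap.fst ℝ ℝ V3).hasFDerivAt.comp_hasDerivAt t hp

theorem hasDerivAt_vector_part {p : ℝ → Quat4} {p' : Quat4} {t : ℝ} (hp : HasDerivAt p p' t) :
    HasDerivAt (fun u => (p u).2) p'.2 t :=
  (ContinuousLinearMap.snd ℝ ℝ V3).hasFDerivAt.comp_hasDerivAt t hp

theorem hasDerivAt_qmul {p q : ℝ → Quat4} {p' q' : Quat4} {t : ℝ}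
    (hp : HasDerivAt p p' t) (hq : HasDerivAt q q' t) :
    HasDerivAt (fun u => qmul (p u) (q u)) (qmul p' (q t) + qmul (p t) q') t := by
  have hp1 := hasDerivAt_scalar_part hp
  have hp2 := hasDerivAt_vector_part hp
  have hq1 := hasDerivAt_scalar_part hq
  have hq2 := hasDerivAt_vector_part hq
  refine (HasDerivAt.prodMk ((hp1.mul hq1).sub (hasDerivAt_dotProduct hp2 hq2))
    (((hp1.smul hq2).add (hq1.smul hp2)).add (hasDerivAt_cross hp2 hq2))).congr_deriv ?_
  ext1
  · simp only [qmul, Prod.fst_add]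
    ring
  · simp only [qmul, Prod.snd_add]
    module

theorem hasDerivAt_qinv {p : ℝ → Quat4} {p' : Quat4} {t : ℝ} (hp : HasDerivAt p p' t) :
    HasDerivAt (fun u => qinv (p u)) (qinv p') t :=
  (hasDerivAt_scalar_part hp).prodMk (hasDerivAt_vector_part hp).neg

/-- Moving a pure quaternion through a unit quaternion rotates it. -/
theorem qmul_qpure_rotQ_transpose {p : Quat4} (hp : isUnitQuat p) (x : V3) :
    qmul p (qpure ((rotQ p)ᵀ *ᵥ x)) = qmul (qpure x) p := by
  have homogeneous : qmul p (qpure ((rotQ p)ᵀ *ᵥ x))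
      = (p.1 ^ 2 + p.2 ⬝ᵥ p.2) • qmul (qpure x) p := by
    simp only [rotQ_transpose_mulVec]
    ext i
    · simp only [qmul, qpure, dotProduct, Fin.sum_univ_three, cross_coord_zero, cross_coord_one,
        cross_coord_two, Pi.add_apply, Pi.sub_apply, Pi.smul_apply, Prod.smul_fst, smul_eq_mul]
      ring
    · fin_cases i <;>
      · simp only [Fin.mk_one, Fin.zero_eta, Fin.reduceFinMk, qmul, qpure, dotProduct,
          Fin.sum_univ_three, cross_coord_zero, cross_coord_one, cross_coord_two, Pi.add_apply,
          Pi.sub_apply, Pi.smul_apply, Prod.smul_snd, smul_eq_mul]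
        ring
  rwa [show p.1 ^ 2 + p.2 ⬝ᵥ p.2 = 1 from hp, one_smul] at homogeneous

/-- The attitude error `P = Q̂⁻¹ ⊙ Q` of two rotating frames obeys `Ṗ = ½ P ⊙ (0, a - R_Pᵀ b)`. -/
theorem hasDerivAt_attitude_error {Q Qh : ℝ → Quat4} {a b : V3} {t : ℝ}
    (hUQ : isUnitQuat (Q t)) (hUQh : isUnitQuat (Qh t))
    (hQ : HasDerivAt Q ((1 / 2 : ℝ) • qmul (Q t) (qpure a)) t)
    (hQh : HasDerivAt Qh ((1 / 2 : ℝ) • qmul (Qh t) (qpure b)) t) :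
    HasDerivAt (fun u => qmul (qinv (Qh u)) (Q u))
      ((1 / 2 : ℝ) • qmul (qmul (qinv (Qh t)) (Q t))
        (qpure (a - (rotQ (qmul (qinv (Qh t)) (Q t)))ᵀ *ᵥ b))) t := by
  refine (hasDerivAt_qmul (hasDerivAt_qinv hQh) hQ).congr_deriv ?_
  have hsub (p : Quat4) (x y : V3) :
      qmul p (qpure (x - y)) = qmul p (qpure x) - qmul p (qpure y) := by
    ext1
    · simp only [qmul, qpure, Prod.fst_sub, dotProduct_sub]
      ring
    · simp only [qmul, qpure, Prod.snd_sub, map_sub]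
      module
  rw [hsub, qmul_qpure_rotQ_transpose (isUnitQuat_qmul_qinv hUQh hUQ)]
  ext i
  · simp only [qmul, qpure, qinv, dotProduct, Fin.sum_univ_three, cross_coord_zero,
      cross_coord_one, cross_coord_two, Pi.add_apply, Pi.smul_apply, Pi.neg_apply,
      Prod.smul_fst, Prod.smul_snd, Prod.fst_add, Prod.fst_sub, smul_eq_mul]
    ring
  · fin_cases i <;>
    · simp only [Fin.mk_one, Fin.zero_eta, Fin.reduceFinMk, qmul, qpure, qinv, dotProduct,
        Fin.sum_univ_three, cross_coord_zero, cross_coord_one, cross_coord_two, Pi.add_apply,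
        Pi.sub_apply, Pi.smul_apply, Pi.neg_apply, Prod.smul_fst, Prod.smul_snd, Prod.snd_add,
        Prod.snd_sub, smul_eq_mul]
      ring

/-- Derivative of a vector seen from a rotating frame. -/
theorem hasDerivAt_rotQ_transpose_mulVec {P : ℝ → Quat4} {x : ℝ → V3} {η x' : V3} {t : ℝ}
    (hP : HasDerivAt P ((1 / 2 : ℝ) • qmul (P t) (qpure η)) t) (hx : HasDerivAt x x' t) :
    HasDerivAt (fun u => (rotQ (P u))ᵀ *ᵥ x u)
      ((rotQ (P t))ᵀ *ᵥ x' - crossProduct η ((rotQ (P t))ᵀ *ᵥ x t)) t := by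
  simp only [rotQ_transpose_mulVec]
  have hs := hasDerivAt_scalar_part hP
  have hv := hasDerivAt_vector_part hP
  refine (((((hs.fun_pow 2).sub (hasDerivAt_dotProduct hv hv)).smul hx).add
    (((hasDerivAt_dotProduct hv hx).const_mul 2).smul hv)).sub
      ((hs.const_mul 2).smul (hasDerivAt_cross hv hx))).congr_deriv ?_
  ext i
  fin_cases i <;>
  · simp only [Fin.mk_one, Fin.zero_eta, Fin.reduceFinMk, qmul, qpure, dotProduct,
      Fin.sum_univ_three, cross_coord_zero, cross_coord_one, cross_coord_two, Pi.add_apply,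
      Pi.sub_apply, Pi.smul_apply, Prod.smul_fst, Prod.smul_snd, smul_eq_mul]
    ring

/-! ### Scalar differential inequalities -/

theorem sub_le_mul_of_hasDerivAt_le {f f' : ℝ → ℝ} {a b C : ℝ} (hab : a ≤ b)
    (hf : ∀ x ∈ Set.Icc a b, HasDerivAt f (f' x) x) (hC : ∀ x ∈ Set.Icc a b, f' x ≤ C) :
    f b - f a ≤ C * (b - a) := by
  rcases hab.eq_or_lt with rfl | hlt
  · simp
  · obtain ⟨c, hc, hs⟩ := exists_hasDerivAt_eq_slope f f' hlt
      (fun x hx => (hf x hx).continuousAt.continuousWithinAt)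
      (fun x hx => hf x (Set.Ioo_subset_Icc_self hx))
    have := hC c (Set.Ioo_subset_Icc_self hc)
    rw [hs, div_le_iff₀ (sub_pos.mpr hlt)] at this
    exact this

/-- One-sided form of Barbalat's lemma. -/
theorem eventually_le_of_deriv_le_neg_add {F F' g g' h : ℝ → ℝ} {l L : ℝ}
    (hF : ∀ t ≥ (0 : ℝ), HasDerivAt F (F' t) t) (hlim : Tendsto F atTop (nhds l))
    (hg : ∀ t ≥ (0 : ℝ), HasDerivAt g (g' t) t) (hL : ∀ t ≥ (0 : ℝ), |g' t| ≤ L)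
    (hh : Tendsto h atTop (nhds 0)) (hle : ∀ t ≥ (0 : ℝ), F' t ≤ -g t + h t)
    {ε : ℝ} (hε : 0 < ε) : ∀ᶠ t in atTop, g t ≤ ε := by
  have hL0 : 0 ≤ L := (abs_nonneg _).trans (hL 0 le_rfl)
  set d : ℝ := ε / (2 * (L + 1)) with hd
  have hd0 : 0 < d := by positivity
  have hLd : L * d ≤ ε / 2 := by
    rw [hd, mul_div_assoc', div_le_div_iff₀ (by positivity) (by norm_num)]
    nlinarith
  have hshift : Tendsto (fun t => F (t + d) - F t) atTop (nhds 0) := by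
    simpa using (hlim.comp (tendsto_atTop_add_const_right atTop d tendsto_id)).sub hlim
  have hsmall : ∀ᶠ t in atTop, ∀ u ≥ t, h u < ε / 4 :=
    eventually_forall_ge_atTop.mpr
      (hh.eventually (gt_mem_nhds (by positivity : (0 : ℝ) < ε / 4)))
  filter_upwards [hshift.eventually (lt_mem_nhds (by nlinarith : -(ε / 4 * d) < 0)), hsmall,
    eventually_ge_atTop 0] with t h1 h2 h0
  by_contra! hgt
  have hlow : ∀ x ∈ Set.Icc t (t + d), F' x ≤ -(ε / 4) := by
    intro x hx
    have hx0 : 0 ≤ x := h0.trans hx.1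
    have hgx := sub_le_mul_of_hasDerivAt_le (f := fun u => -g u) (f' := fun u => -g' u)
      (C := L) hx.1
      (fun u hu => (hg u (h0.trans hu.1)).neg)
      (fun u hu => (neg_le_abs _).trans (hL u (h0.trans hu.1)))
    have : L * (x - t) ≤ L * d := mul_le_mul_of_nonneg_left (by linarith [hx.2]) hL0
    linarith [hle x hx0, h2 x hx.1]
  have := sub_le_mul_of_hasDerivAt_le (by linarith : t ≤ t + d)
    (fun x hx => hF x (h0.trans hx.1)) hlow
  nlinarith

theorem exists_tendsto_of_hasDerivAt_nonpos {F F' : ℝ → ℝ} {m : ℝ}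
    (hF : ∀ t ≥ (0 : ℝ), HasDerivAt F (F' t) t) (hF' : ∀ t ≥ (0 : ℝ), F' t ≤ 0)
    (hm : ∀ t ≥ (0 : ℝ), m ≤ F t) : ∃ l, Tendsto F atTop (nhds l) := by
  have hanti : Antitone fun t => F (max t 0) := by
    intro a b hab
    have h0 : (0 : ℝ) ≤ max a 0 := le_max_right _ _
    have := sub_le_mul_of_hasDerivAt_le (max_le_max_right 0 hab)
      (fun x hx => hF x (h0.trans hx.1)) (fun x hx => hF' x (h0.trans hx.1))
    dsimp only
    linarith
  refine ⟨_, (tendsto_atTop_ciInf hanti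
    ⟨m, by rintro _ ⟨t, rfl⟩; exact hm _ (le_max_right _ _)⟩).congr' ?_⟩
  filter_upwards [eventually_ge_atTop 0] with t ht
  rw [max_eq_left ht]

/-- A bounded function whose derivative is at least `1` wherever a second function `E` exceeds a
threshold, while `E` increases through that threshold, forces `E` to stay below it. -/
theorem le_of_increasing_above {e e' E E' : ℝ → ℝ} {M : ℝ}
    (he : ∀ t ≥ (0 : ℝ), HasDerivAt e (e' t) t) (hE : ∀ t ≥ (0 : ℝ), HasDerivAt E (E' t) t)
    (h0 : ∀ t ≥ (0 : ℝ), 0 ≤ e t) (h1 : ∀ t ≥ (0 : ℝ), e t ≤ 1)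
    (he' : ∀ t ≥ (0 : ℝ), M ≤ E t → 1 ≤ e' t) (hE' : ∀ t ≥ (0 : ℝ), M ≤ E t → 0 < E' t) :
    ∀ t ≥ (0 : ℝ), E t ≤ M := by
  intro t ht
  by_contra! hlt
  have hstay : ∀ x ∈ Set.Icc t (t + 2), -E x ≤ -M :=
    image_le_of_deriv_right_lt_deriv_boundary (f := fun x => -E x) (f' := fun x => -E' x)
      (B' := fun _ => 0)
      (fun x hx => (hE x (ht.trans hx.1)).neg.continuousAt.continuousWithinAt)
      (fun x hx => (hE x (ht.trans hx.1)).neg.hasDerivWithinAt)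
      (by linarith) (fun x => hasDerivAt_const x (-M))
      (fun x hx hxM => by
        linarith [hE' x (ht.trans hx.1) (by linarith)])
  have := sub_le_mul_of_hasDerivAt_le (f := fun u => -e u) (C := -1)
    (by linarith : t ≤ t + 2) (fun x hx => (he x (ht.trans hx.1)).neg)
    (fun x hx => by linarith [he' x (ht.trans hx.1) (by linarith [hstay x hx])])
  linarith [h0 t ht, h1 (t + 2) (by linarith)]

/-! ### The transformed error -/

theorem hasDerivAt_transformed_error {e ξ : ℝ → ℝ} {e' ξ' δ t : ℝ}
    (he : HasDerivAt e e' t) (hξ : HasDerivAt ξ ξ' t) (hξ0 : 0 < ξ t) (hδ : 0 < δ)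
    (he0 : 0 ≤ e t) (hlt : e t < δ * ξ t) :
    HasDerivAt (fun u => 1 / 2 * Real.log ((δ + e u / ξ u) / (δ - e u / ξ u)))
      (1 / (2 * ξ t) * (1 / (δ + e t / ξ t) + 1 / (δ - e t / ξ t)) * (e' - e t * ξ' / ξ t)) t := by
  have hz := he.div hξ hξ0.ne'
  have hz0 : 0 ≤ e t / ξ t := by positivity
  have hz1 : 0 < δ - e t / ξ t := by rw [sub_pos, div_lt_iff₀ hξ0]; exact hlt
  have hz2 : 0 < δ + e t / ξ t := by positivity
  refine (((((hasDerivAt_const t δ).add hz).div ((hasDerivAt_const t δ).sub hz) hz1.ne').log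
    (div_pos hz2 hz1).ne').const_mul (1 / 2)).congr_deriv ?_
  simp only [Pi.add_apply, Pi.sub_apply, Pi.div_apply]
  have hξne := hξ0.ne'
  generalize δ - e t / ξ t = m at hz1 ⊢
  generalize δ + e t / ξ t = a at hz2 ⊢
  field_simp
  ring

theorem half_log_ratio_nonneg {δ z : ℝ} (hz : 0 ≤ z) (hzδ : z < δ) :
    0 ≤ 1 / 2 * Real.log ((δ + z) / (δ - z)) := by
  have : 1 ≤ (δ + z) / (δ - z) := by
    rw [one_le_div (by linarith)]; linarith
  have := Real.log_nonneg this
  positivity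

theorem half_log_ratio_le {δ z : ℝ} (hz : 0 ≤ z) (hzδ : z < δ) :
    1 / 2 * Real.log ((δ + z) / (δ - z)) ≤ z / (δ - z) := by
  have h0 : 0 < δ - z := by linarith
  have h1 := Real.log_le_sub_one_of_pos (div_pos (by linarith : 0 < δ + z) h0)
  have h2 : (δ + z) / (δ - z) - 1 = 2 * (z / (δ - z)) := by field_simp; ring
  linarith

theorem inv_gap_le_of_half_log_ratio_le {δ z M : ℝ} (hz : 0 ≤ z) (hzδ : z < δ)
    (hM : 1 / 2 * Real.log ((δ + z) / (δ - z)) ≤ M) : 1 / (δ - z) ≤ Real.exp (2 * M) / δ := by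
  have h0 : 0 < δ - z := by linarith
  have h1 : (δ + z) / (δ - z) ≤ Real.exp (2 * M) := by
    rw [← Real.log_le_iff_le_exp (div_pos (by linarith) h0)]
    linarith
  rw [div_le_iff₀ h0] at h1
  rw [div_le_div_iff₀ h0 (by linarith)]
  linarith

set_option maxHeartbeats 1000000 in
/-- The scalar error dynamics are of saddle type: any trajectory that remains in the performance
envelope has bounded transformed error `E` and energy `K`, and its error `e` vanishes. -/
theorem performance_error_convergence
    {k γ δ ξmin ξmax B : ℝ} (hk : 0 < k) (hγ : 0 < γ) (hδ : 0 < δ) (hξmin : 0 < ξmin)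
    {ξ ξ' e p E Δ K : ℝ → ℝ}
    (hξ : ∀ t ≥ (0 : ℝ), HasDerivAt ξ (ξ' t) t) (hξ' : ∀ t ≥ (0 : ℝ), ξ' t ≤ 0)
    (hξl : ∀ t ≥ (0 : ℝ), ξmin ≤ ξ t) (hξu : ∀ t ≥ (0 : ℝ), ξ t ≤ ξmax)
    (hE : ∀ t, E t = 1 / 2 * Real.log ((δ + e t / ξ t) / (δ - e t / ξ t)))
    (hΔ : ∀ t, Δ t = 1 / (2 * ξ t) * (1 / (δ + e t / ξ t) + 1 / (δ - e t / ξ t)))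
    (he : ∀ t ≥ (0 : ℝ), HasDerivAt e
      (1 / 2 * p t + 1 / 2 * (k * (E t * Δ t + 1)) * (e t * (2 - e t))) t)
    (hK : ∀ t ≥ (0 : ℝ), HasDerivAt K (γ * (E t * Δ t + 1) * p t) t)
    (hp : ∀ t ≥ (0 : ℝ), p t ^ 2 ≤ B * K t) (hK0 : ∀ t ≥ (0 : ℝ), 0 ≤ K t) (hB : 0 ≤ B)
    (he0 : ∀ t ≥ (0 : ℝ), 0 ≤ e t) (he1 : ∀ t ≥ (0 : ℝ), e t ≤ 1)
    (heδ : ∀ t ≥ (0 : ℝ), e t < δ * ξ t) :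
    (∃ M, ∀ t ≥ (0 : ℝ), |E t| ≤ M) ∧ (∃ M, ∀ t ≥ (0 : ℝ), |E t * Δ t + 1| ≤ M) ∧
      (∃ M, ∀ t ≥ (0 : ℝ), K t ≤ M) ∧ Tendsto e atTop (nhds 0) ∧ Tendsto E atTop (nhds 0) := by
  have hξ0 : ∀ t ≥ (0 : ℝ), 0 < ξ t := fun t ht => hξmin.trans_le (hξl t ht)
  have hz0 : ∀ t ≥ (0 : ℝ), 0 ≤ e t / ξ t := fun t ht => div_nonneg (he0 t ht) (hξ0 t ht).le
  have hzδ : ∀ t ≥ (0 : ℝ), e t / ξ t < δ := fun t ht => (div_lt_iff₀ (hξ0 t ht)).mpr (heδ t ht)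
  have hξmax : 0 < ξmax := (hξ0 0 le_rfl).trans_le (hξu 0 le_rfl)
  have hE0 : ∀ t ≥ (0 : ℝ), 0 ≤ E t := fun t ht => by
    rw [hE]; exact half_log_ratio_nonneg (hz0 t ht) (hzδ t ht)
  have hEle : ∀ t ≥ (0 : ℝ), E t ≤ (e t / ξ t) / (δ - e t / ξ t) := fun t ht => by
    rw [hE]; exact half_log_ratio_le (hz0 t ht) (hzδ t ht)
  have hΔ0 : ∀ t ≥ (0 : ℝ), 0 < Δ t := fun t ht => by
    have h1 := hz0 t ht
    have h2 := sub_pos.mpr (hzδ t ht)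
    have h3 := hξ0 t ht
    rw [hΔ]; positivity
  have hφ1 : ∀ t ≥ (0 : ℝ), 1 ≤ E t * Δ t + 1 := fun t ht => by
    nlinarith [mul_nonneg (hE0 t ht) (hΔ0 t ht).le]
  have hEder : ∀ t ≥ (0 : ℝ), HasDerivAt E
      (Δ t * ((1 / 2 * p t + 1 / 2 * (k * (E t * Δ t + 1)) * (e t * (2 - e t)))
        - e t * ξ' t / ξ t)) t := fun t ht => by
    rw [hΔ, funext hE]
    simpa only [hE, hΔ] using
      hasDerivAt_transformed_error (he t ht) (hξ t ht) (hξ0 t ht) hδ (he0 t ht) (heδ t ht)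
  have hdrift : ∀ t ≥ (0 : ℝ), e t * ξ' t / ξ t ≤ 0 := fun t ht =>
    div_nonpos_of_nonpos_of_nonneg (mul_nonpos_of_nonneg_of_nonpos (he0 t ht) (hξ' t ht))
      (hξ0 t ht).le
  -- The indefinite Lyapunov function decreases along trajectories.
  set U : ℝ → ℝ := fun t => K t - γ * E t ^ 2 - 2 * γ * e t with hUdef
  set U' : ℝ → ℝ := fun t => 2 * γ * (E t * Δ t) * (e t * ξ' t / ξ t)
    - γ * k * (E t * Δ t + 1) ^ 2 * (e t * (2 - e t)) with hU'def
  have hU : ∀ t ≥ (0 : ℝ), HasDerivAt U (U' t) t := fun t ht => by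
    refine (((hK t ht).sub (((hEder t ht).fun_pow 2).const_mul γ)).sub
      ((he t ht).const_mul (2 * γ))).congr_deriv ?_
    simp only [hU'def]
    ring
  have hU'le : ∀ t ≥ (0 : ℝ), U' t ≤ -(γ * k * (e t * (2 - e t))) := fun t ht => by
    have h1 : 2 * γ * (E t * Δ t) * (e t * ξ' t / ξ t) ≤ 0 :=
      mul_nonpos_of_nonneg_of_nonpos (by have := hE0 t ht; have := hΔ0 t ht; positivity)
        (hdrift t ht)
    have h2 : 0 ≤ γ * k * (e t * (2 - e t)) := by
      have := he0 t ht
      have : 0 ≤ 2 - e t := by linarith [he1 t ht]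
      positivity
    have h3 : 1 ≤ (E t * Δ t + 1) ^ 2 := one_le_pow₀ (hφ1 t ht)
    simp only [hU'def]
    nlinarith
  have hU'0 : ∀ t ≥ (0 : ℝ), U' t ≤ 0 := fun t ht => (hU'le t ht).trans (by
    have := he0 t ht
    have : 0 ≤ 2 - e t := by linarith [he1 t ht]
    rw [neg_nonpos]; positivity)
  have hUle : ∀ t ≥ (0 : ℝ), U t ≤ U 0 := fun t ht => by
    have := sub_le_mul_of_hasDerivAt_le ht (fun x hx => hU x hx.1) (fun x hx => hU'0 x hx.1)
    linarith
  have hKle : ∀ t ≥ (0 : ℝ), K t ≤ |U 0| + 2 * γ + γ * E t ^ 2 := fun t ht => by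
    have h1 := hUle t ht
    have h2 := le_abs_self (U 0)
    have h3 := mul_le_mul_of_nonneg_left (he1 t ht) hγ.le
    rw [show U t = K t - γ * E t ^ 2 - 2 * γ * e t from rfl] at h1
    linarith
  -- A large transformed error would push `e` out of its range.
  set A : ℝ := B * (|U 0| + 3 * γ) + 1 with hA
  have hA1 : 1 ≤ A := by rw [hA]; linarith [show 0 ≤ B * (|U 0| + 3 * γ) by positivity]
  set b : ℝ := k * (1 / (2 * ξmax * δ)) * (δ * ξmin / 2) with hb
  have hb0 : 0 < b := by positivity
  set M : ℝ := (A + 2) / b + 1 with hM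
  have hM1 : 1 ≤ M := by rw [hM]; linarith [show 0 ≤ (A + 2) / b by positivity]
  have hbM : A + 2 ≤ b * M := by
    have : b * M = A + 2 + b := by rw [hM]; field_simp
    linarith
  have hpush : ∀ t ≥ (0 : ℝ), M ≤ E t →
      1 ≤ 1 / 2 * p t + 1 / 2 * (k * (E t * Δ t + 1)) * (e t * (2 - e t)) := by
    intro t ht hMt
    have hgap : 0 < δ - e t / ξ t := sub_pos.mpr (hzδ t ht)
    have hE1 : 1 ≤ E t := hM1.trans hMt
    have hhalf : δ / 2 ≤ e t / ξ t := by
      have := hE1.trans (hEle t ht)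
      rw [one_le_div hgap] at this
      linarith
    have hinv : E t / δ ≤ 1 / (δ - e t / ξ t) := by
      have h1 := hEle t ht
      rw [le_div_iff₀ hgap] at h1
      rw [div_le_div_iff₀ hδ hgap]
      linarith [hzδ t ht]
    have helow : δ * ξmin / 2 ≤ e t * (2 - e t) := by
      rw [le_div_iff₀ (hξ0 t ht)] at hhalf
      nlinarith [hξl t ht, he0 t ht, he1 t ht]
    have hΔlow : E t * (1 / (2 * ξmax * δ)) ≤ Δ t := by
      rw [hΔ]
      have h1 : 1 / (2 * ξmax) ≤ 1 / (2 * ξ t) :=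
        one_div_le_one_div_of_le (by linarith [hξ0 t ht]) (by linarith [hξu t ht])
      have h2 : 0 ≤ 1 / (δ + e t / ξ t) := by have := hz0 t ht; positivity
      have h3 : E t / δ ≤ 1 / (δ + e t / ξ t) + 1 / (δ - e t / ξ t) := by linarith
      calc E t * (1 / (2 * ξmax * δ)) = 1 / (2 * ξmax) * (E t / δ) := by field_simp
        _ ≤ _ := mul_le_mul h1 h3 (by have := hE0 t ht; positivity)
              (by have := hξ0 t ht; positivity)
    have hpA : |p t| ≤ A * E t := by
      refine abs_le_of_sq_le_sq ?_ (by positivity)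
      have hsq : 1 ≤ E t ^ 2 := one_le_pow₀ hE1
      have h1 : K t ≤ (|U 0| + 3 * γ) * E t ^ 2 := by
        nlinarith [hKle t ht, abs_nonneg (U 0)]
      calc p t ^ 2 ≤ B * K t := hp t ht
        _ ≤ B * ((|U 0| + 3 * γ) * E t ^ 2) := by gcongr
        _ ≤ A * E t ^ 2 := by rw [hA]; nlinarith
        _ ≤ A ^ 2 * E t ^ 2 := by
            gcongr
            nlinarith
        _ = (A * E t) ^ 2 := by ring
    have hgrow : b * E t ^ 2 ≤ k * (E t * Δ t + 1) * (e t * (2 - e t)) := by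
      have hE0' := hE0 t ht
      calc b * E t ^ 2
          = k * (E t * (E t * (1 / (2 * ξmax * δ)))) * (δ * ξmin / 2) := by rw [hb]; ring
        _ ≤ k * (E t * Δ t + 1) * (e t * (2 - e t)) := by
            have h1 : E t * (E t * (1 / (2 * ξmax * δ))) ≤ E t * Δ t + 1 := by
              linarith [mul_le_mul_of_nonneg_left hΔlow hE0']
            have h2 : 0 ≤ E t * Δ t + 1 := by linarith [hφ1 t ht]
            gcongr
    have hbE : A + 2 ≤ b * E t := hbM.trans (by gcongr)
    nlinarith [neg_abs_le (p t)]
  have hEM : ∀ t ≥ (0 : ℝ), E t ≤ M :=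
    le_of_increasing_above he hEder he0 he1 hpush
      (fun t ht hMt => mul_pos (hΔ0 t ht) (by linarith [hpush t ht hMt, hdrift t ht]))
  -- Boundedness
  obtain ⟨Φ, hΦ⟩ : ∃ Φ, ∀ t ≥ (0 : ℝ), E t * Δ t + 1 ≤ Φ := by
    refine ⟨M * (1 / (2 * ξmin) * (1 / δ + Real.exp (2 * M) / δ)) + 1, fun t ht => ?_⟩
    have hgap : 0 < δ - e t / ξ t := sub_pos.mpr (hzδ t ht)
    have h1 : Δ t ≤ 1 / (2 * ξmin) * (1 / δ + Real.exp (2 * M) / δ) := by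
      rw [hΔ]
      have ha : 1 / (2 * ξ t) ≤ 1 / (2 * ξmin) :=
        one_div_le_one_div_of_le (by positivity) (by linarith [hξl t ht])
      have hb' : 1 / (δ + e t / ξ t) ≤ 1 / δ :=
        one_div_le_one_div_of_le hδ (by linarith [hz0 t ht])
      have hc := inv_gap_le_of_half_log_ratio_le (M := M) (hz0 t ht) (hzδ t ht) (by
        rw [← hE]; exact hEM t ht)
      have hz := hz0 t ht
      gcongr
    have h2 := mul_le_mul (hEM t ht) h1 (hΔ0 t ht).le (by linarith)
    linarith
  have hEsq : ∀ t ≥ (0 : ℝ), E t ^ 2 ≤ M ^ 2 := fun t ht =>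
    pow_le_pow_left₀ (hE0 t ht) (hEM t ht) 2
  obtain ⟨κ, hκ⟩ : ∃ κ, ∀ t ≥ (0 : ℝ), K t ≤ κ :=
    ⟨|U 0| + 2 * γ + γ * M ^ 2, fun t ht => (hKle t ht).trans (by
      have := hEsq t ht
      gcongr)⟩
  -- Convergence
  obtain ⟨l, hl⟩ := exists_tendsto_of_hasDerivAt_nonpos hU hU'0 (m := -(γ * M ^ 2) - 2 * γ)
    (fun t ht => by
      have h1 := mul_le_mul_of_nonneg_left (hEsq t ht) hγ.le
      have h2 := mul_le_mul_of_nonneg_left (he1 t ht) hγ.le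
      simp only [hUdef]
      linarith [hK0 t ht])
  have hgder : ∀ t ≥ (0 : ℝ), HasDerivAt (fun u => γ * k * (e u * (2 - e u)))
      (γ * k * (2 * (1 - e t) *
        (1 / 2 * p t + 1 / 2 * (k * (E t * Δ t + 1)) * (e t * (2 - e t))))) t := fun t ht => by
    refine (((he t ht).mul ((he t ht).const_sub 2)).const_mul (γ * k)).congr_deriv ?_
    ring
  have hκ0 : 0 ≤ κ := (hK0 0 le_rfl).trans (hκ 0 le_rfl)
  have hgbd : ∀ t ≥ (0 : ℝ), |γ * k * (2 * (1 - e t) *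
      (1 / 2 * p t + 1 / 2 * (k * (E t * Δ t + 1)) * (e t * (2 - e t))))|
        ≤ γ * k * (2 * (1 / 2 * (B * κ + 1) + 1 / 2 * (k * Φ) * 1)) := by
    intro t ht
    have h1 : |1 - e t| ≤ 1 := abs_le.mpr ⟨by linarith [he1 t ht], by linarith [he0 t ht]⟩
    have hBκ : 0 ≤ B * κ := by positivity
    have h2 : |p t| ≤ B * κ + 1 := by
      refine abs_le_of_sq_le_sq ?_ (by positivity)
      nlinarith [hp t ht, mul_le_mul_of_nonneg_left (hκ t ht) hB]
    have h3 : e t * (2 - e t) ≤ 1 := by nlinarith [sq_nonneg (e t - 1)]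
    have h4 : 0 ≤ e t * (2 - e t) := mul_nonneg (he0 t ht) (by linarith [he1 t ht])
    have h5 := hφ1 t ht
    have h6 := hΦ t ht
    have h8 : 0 ≤ Φ := by linarith
    rw [abs_mul, abs_of_pos (mul_pos hγ hk), abs_mul, abs_mul, abs_two]
    have h7 : |1 / 2 * p t + 1 / 2 * (k * (E t * Δ t + 1)) * (e t * (2 - e t))|
        ≤ 1 / 2 * (B * κ + 1) + 1 / 2 * (k * Φ) * 1 := by
      refine (abs_add_le _ _).trans ?_
      rw [abs_mul, abs_of_pos (by norm_num : (0 : ℝ) < 1 / 2),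
        abs_of_nonneg (a := 1 / 2 * (k * (E t * Δ t + 1)) * (e t * (2 - e t))) (by positivity)]
      gcongr
    calc γ * k * (2 * |1 - e t| * |1 / 2 * p t + 1 / 2 * (k * (E t * Δ t + 1)) * (e t * (2 - e t))|)
        ≤ γ * k * (2 * 1 * (1 / 2 * (B * κ + 1) + 1 / 2 * (k * Φ) * 1)) := by gcongr
      _ = _ := by ring
  have hetend : Tendsto e atTop (nhds 0) := by
    rw [Metric.tendsto_nhds]
    intro ε hε
    have hγk : 0 < γ * k := mul_pos hγ hk
    filter_upwards [eventually_le_of_deriv_le_neg_add (h := fun _ => 0) hU hl hgder hgbd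
      tendsto_const_nhds (fun t ht => by simpa using hU'le t ht)
      (ε := γ * k * (ε / 2)) (by positivity), eventually_ge_atTop 0] with t h1 h0
    have h2 : e t * (2 - e t) ≤ ε / 2 := le_of_mul_le_mul_left h1 hγk
    rw [Real.dist_0_eq_abs, abs_of_nonneg (he0 t h0)]
    nlinarith [he0 t h0, he1 t h0]
  refine ⟨⟨M, fun t ht => by rw [abs_of_nonneg (hE0 t ht)]; exact hEM t ht⟩,
    ⟨Φ, fun t ht => by rw [abs_of_pos (by linarith [hφ1 t ht])]; exact hΦ t ht⟩, ⟨κ, hκ⟩,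
    hetend, ?_⟩
  have hztend : Tendsto (fun t => e t / ξ t) atTop (nhds 0) := by
    refine squeeze_zero' (g := fun t => e t / ξmin) ?_ ?_ (by simpa using hetend.div_const ξmin)
    · filter_upwards [eventually_ge_atTop 0] with t ht using hz0 t ht
    · filter_upwards [eventually_ge_atTop 0] with t ht
      exact div_le_div_of_nonneg_left (he0 t ht) hξmin (hξl t ht)
  refine squeeze_zero' (g := fun t => (e t / ξ t) / (δ - e t / ξ t)) ?_ ?_ ?_
  · filter_upwards [eventually_ge_atTop 0] with t ht using hE0 t ht
  · filter_upwards [eventually_ge_atTop 0] with t ht using hEle t ht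
  · have h := hztend.div (hztend.const_sub δ) (by simpa using hδ.ne')
    rw [zero_div] at h
    exact h

/-! ### Rigid-body error dynamics -/

theorem dotProduct_self_le_three_mul_norm_sq (x : V3) : x ⬝ᵥ x ≤ 3 * ‖x‖ ^ 2 := by
  have h (i : Fin 3) : x i * x i ≤ ‖x‖ ^ 2 := by
    have := norm_le_pi_norm x i
    rw [Real.norm_eq_abs] at this
    rw [← sq, ← sq_abs]
    exact pow_le_pow_left₀ (abs_nonneg _) this 2
  rw [dotProduct, Fin.sum_univ_three]
  linarith [h 0, h 1, h 2]

theorem norm_le_vnorm (x : V3) : ‖x‖ ≤ vnorm x := by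
  refine (pi_norm_le_iff_of_nonneg (Real.sqrt_nonneg _)).mpr fun i => Real.abs_le_sqrt ?_
  rw [sq, dotProduct]
  exact Finset.single_le_sum (f := fun j => x j * x j) (fun j _ => mul_self_nonneg _)
    (Finset.mem_univ i)

theorem exists_mul_norm_sq_le_of_posDef {J : Matrix (Fin 3) (Fin 3) ℝ} (hJ : J.PosDef) :
    ∃ m > 0, ∀ x : V3, m * ‖x‖ ^ 2 ≤ x ⬝ᵥ J *ᵥ x := by
  have hcont : Continuous fun x : V3 => x ⬝ᵥ J *ᵥ x := by fun_prop
  obtain ⟨u, hu, hmin⟩ := (isCompact_sphere (0 : V3) 1).exists_isMinOn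
    (NormedSpace.sphere_nonempty.mpr zero_le_one) hcont.continuousOn
  have hu0 : u ≠ 0 := by
    rintro rfl
    simp at hu
  refine ⟨u ⬝ᵥ J *ᵥ u, by simpa using hJ.dotProduct_mulVec_pos hu0, fun x => ?_⟩
  rcases eq_or_ne x 0 with rfl | hx
  · simp
  have hx' : ‖x‖ ≠ 0 := norm_ne_zero_iff.mpr hx
  have h := isMinOn_iff.mp hmin (‖x‖⁻¹ • x) (by simp [norm_smul, hx'])
  rw [Matrix.mulVec_smul, smul_dotProduct, dotProduct_smul, smul_eq_mul, smul_eq_mul] at h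
  have h2 := mul_le_mul_of_nonneg_right h (sq_nonneg ‖x‖)
  refine h2.trans_eq ?_
  field_simp

theorem dotProduct_inertia_error {J : Matrix (Fin 3) (Fin 3) ℝ} (hJ : Jᵀ = J) {a w w' u : V3}
    (hw : J *ᵥ w' = crossProduct (J *ᵥ a) a - crossProduct (J *ᵥ (a - w)) (a - w)
      + J *ᵥ crossProduct w (a - w) + u) :
    w ⬝ᵥ J *ᵥ w' = u ⬝ᵥ w := by
  have hsymm (x y : V3) : x ⬝ᵥ J *ᵥ y = (J *ᵥ x) ⬝ᵥ y := by
    rw [Matrix.dotProduct_mulVec, ← Matrix.mulVec_transpose, hJ]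
  rw [hw, dotProduct_add, dotProduct_add, hsymm, Matrix.mulVec_sub]
  generalize J *ᵥ w = b
  generalize J *ᵥ a = c
  simp only [dotProduct, Fin.sum_univ_three, cross_coord_zero, cross_coord_one, cross_coord_two,
    Pi.sub_apply]
  ring

theorem exists_norm_le_of_inertia_error {J : Matrix (Fin 3) (Fin 3) ℝ} (hJ : J.PosDef) (C : ℝ) :
    ∃ L, ∀ a w w' u : V3, ‖a‖ ≤ C → ‖w‖ ≤ C → ‖u‖ ≤ C →
      J *ᵥ w' = crossProduct (J *ᵥ a) a - crossProduct (J *ᵥ (a - w)) (a - w)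
        + J *ᵥ crossProduct w (a - w) + u → ‖w'‖ ≤ L := by
  have hcross {f g : V3 × V3 × V3 → V3} (hf : Continuous f) (hg : Continuous g) :
      Continuous fun z => crossProduct (f z) (g z) := by
    refine continuous_pi fun i => ?_
    fin_cases i <;>
      simp only [Fin.mk_one, Fin.zero_eta, Fin.reduceFinMk, cross_coord_zero, cross_coord_one,
        cross_coord_two] <;>
      fun_prop
  have hcont : Continuous fun z : V3 × V3 × V3 =>
      J⁻¹ *ᵥ (crossProduct (J *ᵥ z.1) z.1 - crossProduct (J *ᵥ (z.1 - z.2.1)) (z.1 - z.2.1)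
        + J *ᵥ crossProduct z.2.1 (z.1 - z.2.1) + z.2.2) := by
    refine continuous_const.matrix_mulVec ((((hcross ?_ ?_).sub (hcross ?_ ?_)).add
      (continuous_const.matrix_mulVec (hcross ?_ ?_))).add ?_) <;> fun_prop
  obtain ⟨L, hL⟩ := (isCompact_closedBall (0 : V3 × V3 × V3) C).exists_bound_of_continuousOn
    hcont.continuousOn
  refine ⟨L, fun a w w' u ha hw hu h => ?_⟩
  have := hL (a, w, u) (by simp [ha, hw, hu])
  rwa [← h, Matrix.mulVec_mulVec,
    Matrix.nonsing_inv_mul _ ((Matrix.isUnit_iff_isUnit_det J).mp hJ.isUnit),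
    Matrix.one_mulVec]
    at this

theorem rotQ_transpose_inertia_dynamics {p : Quat4} (hp : isUnitQuat p)
    {J : Matrix (Fin 3) (Fin 3) ℝ} {x x' W T u : V3}
    (h : (rotQ p * J * (rotQ p)ᵀ) *ᵥ x' = crossProduct ((rotQ p * J * (rotQ p)ᵀ) *ᵥ x) x
      + rotQ p *ᵥ T + (rotQ p * J * (rotQ p)ᵀ) *ᵥ crossProduct x W + u) :
    J *ᵥ ((rotQ p)ᵀ *ᵥ x') = crossProduct (J *ᵥ ((rotQ p)ᵀ *ᵥ x)) ((rotQ p)ᵀ *ᵥ x) + T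
      + J *ᵥ crossProduct ((rotQ p)ᵀ *ᵥ x) ((rotQ p)ᵀ *ᵥ W) + (rotQ p)ᵀ *ᵥ u := by
  have hR : (rotQ p)ᵀ * (rotQ p * J * (rotQ p)ᵀ) = J * (rotQ p)ᵀ := by
    rw [← Matrix.mul_assoc, ← Matrix.mul_assoc, rotQ_transpose_mul hp, Matrix.one_mul]
  have h2 := congrArg ((rotQ p)ᵀ *ᵥ ·) h
  simp only [Matrix.mulVec_add, rotQ_transpose_mulVec_cross hp, Matrix.mulVec_mulVec, hR,
    rotQ_transpose_mul hp, Matrix.one_mulVec] at h2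
  simpa only [← rotQ_transpose_mulVec_cross hp, Matrix.mulVec_mulVec] using h2

/-- If the vector part of a quaternion driven by `w + r` vanishes asymptotically, `r` vanishes, and
`w` is bounded with bounded derivative, then `w` vanishes asymptotically. -/
theorem tendsto_zero_of_quaternion_kinematics {P : ℝ → Quat4} {w w' r : ℝ → V3} {C L : ℝ}
    (hP : ∀ t ≥ (0 : ℝ), HasDerivAt P ((1 / 2 : ℝ) • qmul (P t) (qpure (w t + r t))) t)
    (hs : Tendsto (fun t => (P t).1) atTop (nhds 1))
    (hv : Tendsto (fun t => (P t).2) atTop (nhds 0))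
    (hr : Tendsto r atTop (nhds 0)) (hw : ∀ t ≥ (0 : ℝ), HasDerivAt w (w' t) t)
    (hC : ∀ t ≥ (0 : ℝ), ‖w t‖ ≤ C) (hL : ∀ t ≥ (0 : ℝ), ‖w' t‖ ≤ L) :
    Tendsto w atTop (nhds 0) := by
  have hvi (i : Fin 3) : Tendsto (fun t => (P t).2 i) atTop (nhds 0) := tendsto_pi_nhds.mp hv i
  have hri (i : Fin 3) : Tendsto (fun t => r t i) atTop (nhds 0) := tendsto_pi_nhds.mp hr i
  have hmul {f : ℝ → ℝ} (hf : Tendsto f atTop (nhds 0)) (i : Fin 3) :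
      Tendsto (fun t => f t * w t i) atTop (nhds 0) := by
    refine squeeze_zero_norm' (a := fun t => |f t| * C) ?_ (by simpa using hf.abs.mul_const C)
    filter_upwards [eventually_ge_atTop 0] with t ht
    rw [norm_mul, Real.norm_eq_abs (f t)]
    exact mul_le_mul_of_nonneg_left ((norm_le_pi_norm (w t) i).trans (hC t ht)) (abs_nonneg _)
  have hvr (i j : Fin 3) : Tendsto (fun t => (P t).2 i * (w t j + r t j)) atTop (nhds 0) := by
    simpa [mul_add] using (hmul (hvi i) j).add ((hvi i).mul (hri j))
  have hs1 : Tendsto (fun t => (P t).1 - 1) atTop (nhds 0) := by simpa using hs.sub_const 1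
  have hh (i : Fin 3) : Tendsto (fun t => 1 / 2 * (((P t).1 - 1) * w t i + (P t).1 * r t i
      + crossProduct (P t).2 (w t + r t) i)) atTop (nhds 0) := by
    have hcross : Tendsto (fun t => crossProduct (P t).2 (w t + r t) i) atTop (nhds 0) := by
      fin_cases i <;>
        simp only [Fin.mk_one, Fin.zero_eta, Fin.reduceFinMk, cross_coord_zero, cross_coord_one,
          cross_coord_two, Pi.add_apply]
      · simpa using (hvr 1 2).sub (hvr 2 1)
      · simpa using (hvr 2 0).sub (hvr 0 2)
      · simpa using (hvr 0 1).sub (hvr 1 0)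
    simpa only [mul_zero, add_zero] using
      (((hmul hs1 i).add (hs.mul (hri i))).add hcross).const_mul (1 / 2 : ℝ)
  have hder (i : Fin 3) : ∀ t ≥ (0 : ℝ), HasDerivAt (fun u => (P u).2 i)
      (1 / 2 * w t i + 1 / 2 * (((P t).1 - 1) * w t i + (P t).1 * r t i
        + crossProduct (P t).2 (w t + r t) i)) t := fun t ht => by
    refine (hasDerivAt_pi.mp (hasDerivAt_vector_part (hP t ht)) i).congr_deriv ?_
    simp only [qmul, qpure, Prod.smul_snd, Pi.smul_apply, Pi.add_apply, zero_smul, add_zero,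
      smul_eq_mul]
    ring
  have hwi (i : Fin 3) : ∀ t ≥ (0 : ℝ), HasDerivAt (fun u => 1 / 2 * w u i) (1 / 2 * w' t i) t :=
    fun t ht => (hasDerivAt_pi.mp (hw t ht) i).const_mul _
  have hw'i (i : Fin 3) : ∀ t ≥ (0 : ℝ), |1 / 2 * w' t i| ≤ 1 / 2 * L := fun t ht => by
    rw [abs_mul, abs_of_pos (by norm_num : (0 : ℝ) < 1 / 2)]
    gcongr
    exact (norm_le_pi_norm (w' t) i).trans (hL t ht)
  refine tendsto_pi_nhds.mpr fun i => Metric.tendsto_nhds.mpr fun ε hε => ?_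
  filter_upwards [eventually_le_of_deriv_le_neg_add (fun t ht => (hder i t ht).neg) (hvi i).neg
      (hwi i) (hw'i i) (by simpa using (hh i).neg) (fun t _ => (neg_add _ _).le)
      (ε := ε / 4) (by positivity),
    eventually_le_of_deriv_le_neg_add (hder i) (hvi i)
      (fun t ht => (hwi i t ht).neg) (fun t ht => (abs_neg _).trans_le (hw'i i t ht)) (hh i)
      (fun t _ => by rw [Pi.neg_apply, neg_neg])
      (ε := ε / 4) (by positivity)] with t h1 h2
  rw [Pi.neg_apply] at h2
  rw [Pi.zero_apply, Real.dist_0_eq_abs]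
  exact abs_lt.mpr ⟨by linarith, by linarith⟩

/-- Theorem 1 (full-state attitude observer with guaranteed performance, noise-free
measurements): under the true rigid-body dynamics and the proposed observer with
prescribed performance, (1) `E_o`, `e_o` and `Ω̂` are bounded on `[0,∞)`, and
(2) `E_o, e_o, q̃_o, Ω̃_o → 0` and `q̃_{o0} → 1` as `t → ∞`. -/
theorem observer_guaranteed_performance
    (J : Matrix (Fin 3) (Fin 3) ℝ) (hJ : J.PosDef)
    (ℓo ko γo ξo0 ξoInf δo : ℝ)
    (hℓo : 0 < ℓo) (hko : ℓo ≤ ko) (hγo : 0 < γo)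
    (hξ1 : ξo0 > ξoInf) (hξ2 : ξoInf > 0) (hδo : 0 < δo)
    -- true state, observer state, torque
    (Q Qh : ℝ → Quat4) (Ω Ωh τ : ℝ → V3)
    (hUQ : ∀ t ≥ (0 : ℝ), isUnitQuat (Q t)) (hUQh : ∀ t ≥ (0 : ℝ), isUnitQuat (Qh t))
    -- observation error `Q̃_o = Q̂⁻¹ ⊙ Q`
    (Qtil : ℝ → Quat4) (hQtil : ∀ t, Qtil t = qmul (qinv (Qh t)) (Q t))
    -- inertia matrix and torque expressed in the observer frame
    (Jh : ℝ → Matrix (Fin 3) (Fin 3) ℝ) (hJh : ∀ t, Jh t = rotQ (Qtil t) * J * (rotQ (Qtil t))ᵀ)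
    (τh : ℝ → V3) (hτh : ∀ t, τh t = rotQ (Qtil t) *ᵥ τ t)
    -- prescribed performance function and transformed error
    (ξo : ℝ → ℝ) (hξo : ∀ t, ξo t = (ξo0 - ξoInf) * Real.exp (-ℓo * t) + ξoInf)
    (eo : ℝ → ℝ) (heo : ∀ t, eo t = 1 - (Qtil t).1)
    (Eo : ℝ → ℝ)
    (hEo : ∀ t, Eo t = 1 / 2 * Real.log ((δo + eo t / ξo t) / (δo - eo t / ξo t)))
    (Δo : ℝ → ℝ)
    (hΔo : ∀ t, Δo t = 1 / (2 * ξo t) * (1 / (δo + eo t / ξo t) + 1 / (δo - eo t / ξo t)))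
    -- correction factors
    (WΩ Wτ : ℝ → V3)
    (hWΩ : ∀ t, WΩ t = -((ko * (Eo t * Δo t + 1)) • (rotQ (Qtil t) *ᵥ (Qtil t).2)))
    (hWτ : ∀ t, Wτ t = -((γo * (Eo t * Δo t + 1)) • (rotQ (Qtil t) *ᵥ (Qtil t).2)))
    -- true dynamics: `Q̇ = ½ Q ⊙ (0,Ω)`, `JΩ̇ = (JΩ)×Ω + τ`
    (hQdyn : ∀ t ≥ (0 : ℝ), HasDerivAt Q ((1 / 2 : ℝ) • qmul (Q t) (qpure (Ω t))) t)
    (Ω' : ℝ → V3) (hΩd : ∀ t ≥ (0 : ℝ), HasDerivAt Ω (Ω' t) t)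
    (hΩdyn : ∀ t ≥ (0 : ℝ), J *ᵥ Ω' t = crossProduct (J *ᵥ Ω t) (Ω t) + τ t)
    -- observer dynamics: `Q̂̇ = ½ Q̂ ⊙ (0, Ω̂ + W_Ω)`,
    -- `ĴΩ̂̇ = (ĴΩ̂)×Ω̂ + τ̂ + Ĵ(Ω̂ × W_Ω) + W_τ`
    (hQhdyn : ∀ t ≥ (0 : ℝ), HasDerivAt Qh ((1 / 2 : ℝ) • qmul (Qh t) (qpure (Ωh t + WΩ t))) t)
    (Ωh' : ℝ → V3) (hΩhd : ∀ t ≥ (0 : ℝ), HasDerivAt Ωh (Ωh' t) t)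
    (hΩhdyn : ∀ t ≥ (0 : ℝ), Jh t *ᵥ Ωh' t
      = crossProduct (Jh t *ᵥ Ωh t) (Ωh t) + τh t + Jh t *ᵥ crossProduct (Ωh t) (WΩ t) + Wτ t)
    -- boundedness of the true angular velocity, and initial/performance conditions
    (hΩbdd : ∃ C, ∀ t ≥ (0 : ℝ), vnorm (Ω t) ≤ C)
    (hδinit : δo > eo 0) (hξinit : ξo0 > eo 0)
    (hsign : ∀ t ≥ (0 : ℝ), 0 ≤ (Qtil t).1)
    (hcon : ∀ t ≥ (0 : ℝ), 0 ≤ eo t ∧ eo t < δo * ξo t) :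
    -- (1) boundedness
    ((∃ M, ∀ t ≥ (0 : ℝ), |Eo t| ≤ M) ∧ (∃ M, ∀ t ≥ (0 : ℝ), |eo t| ≤ M) ∧
      (∃ M, ∀ t ≥ (0 : ℝ), vnorm (Ωh t) ≤ M)) ∧
    -- (2) asymptotic convergence
    (Tendsto Eo atTop (nhds 0) ∧ Tendsto eo atTop (nhds 0) ∧
      Tendsto (fun t => (Qtil t).2) atTop (nhds 0) ∧
      Tendsto (fun t => (Qtil t).1) atTop (nhds 1) ∧
      Tendsto (fun t => Ω t - (rotQ (Qtil t))ᵀ *ᵥ Ωh t) atTop (nhds 0)) := by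
  have hko0 : 0 < ko := hℓo.trans_le hko
  have hU : ∀ t ≥ (0 : ℝ), isUnitQuat (Qtil t) := fun t ht => by
    rw [hQtil]
    exact isUnitQuat_qmul_qinv (hUQh t ht) (hUQ t ht)
  set φ : ℝ → ℝ := fun t => Eo t * Δo t + 1 with hφ
  set w : ℝ → V3 := fun t => Ω t - (rotQ (Qtil t))ᵀ *ᵥ Ωh t with hw
  set r : ℝ → V3 := fun t => (ko * φ t) • (Qtil t).2 with hr
  have hy (t : ℝ) : (rotQ (Qtil t))ᵀ *ᵥ Ωh t = Ω t - w t := (sub_sub_cancel _ _).symm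
  have hRWΩ : ∀ t ≥ (0 : ℝ), (rotQ (Qtil t))ᵀ *ᵥ WΩ t = -r t := fun t ht => by
    rw [hWΩ, rotQ_mulVec_vec (hU t ht), Matrix.mulVec_neg, Matrix.mulVec_smul,
      rotQ_transpose_mulVec_vec (hU t ht)]
  have hRWτ : ∀ t ≥ (0 : ℝ), (rotQ (Qtil t))ᵀ *ᵥ Wτ t = -((γo * φ t) • (Qtil t).2) :=
    fun t ht => by
      rw [hWτ, rotQ_mulVec_vec (hU t ht), Matrix.mulVec_neg, Matrix.mulVec_smul,
        rotQ_transpose_mulVec_vec (hU t ht)]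
  -- Error kinematics and dynamics
  have hQder : ∀ t ≥ (0 : ℝ),
      HasDerivAt Qtil ((1 / 2 : ℝ) • qmul (Qtil t) (qpure (w t + r t))) t := fun t ht => by
    have h := hasDerivAt_attitude_error (hUQ t ht) (hUQh t ht) (hQdyn t ht) (hQhdyn t ht)
    simp only [← hQtil] at h
    rwa [Matrix.mulVec_add, hRWΩ t ht, ← sub_sub, sub_neg_eq_add] at h
  obtain ⟨w', hwder, hJw⟩ : ∃ w' : ℝ → V3, (∀ t ≥ (0 : ℝ), HasDerivAt w (w' t) t) ∧
      ∀ t ≥ (0 : ℝ), J *ᵥ w' t = crossProduct (J *ᵥ Ω t) (Ω t)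
        - crossProduct (J *ᵥ (Ω t - w t)) (Ω t - w t) + J *ᵥ crossProduct (w t) (Ω t - w t)
        + (γo * φ t) • (Qtil t).2 := by
    refine ⟨_, fun t ht => (hΩd t ht).sub
      (hasDerivAt_rotQ_transpose_mulVec (hQder t ht) (hΩhd t ht)), fun t ht => ?_⟩
    have h := hΩhdyn t ht
    rw [hJh, hτh] at h
    have h2 := rotQ_transpose_inertia_dynamics (hU t ht) h
    rw [hRWΩ t ht, hRWτ t ht, hy] at h2
    rw [Matrix.mulVec_sub, Matrix.mulVec_sub, hΩdyn t ht, h2, hy, map_neg, map_add,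
      LinearMap.add_apply, Matrix.mulVec_add, Matrix.mulVec_neg,
      ← cross_anticomm (r t), Matrix.mulVec_neg]
    abel
  -- Scalar error and energy
  have hunit : ∀ t ≥ (0 : ℝ), (Qtil t).2 ⬝ᵥ (Qtil t).2 = eo t * (2 - eo t) := fun t ht => by
    have h : (Qtil t).1 ^ 2 + (Qtil t).2 ⬝ᵥ (Qtil t).2 = 1 := hU t ht
    rw [heo]
    linear_combination h
  have he1 : ∀ t ≥ (0 : ℝ), eo t ≤ 1 := fun t ht => by
    rw [heo]
    linarith [hsign t ht]
  have heder : ∀ t ≥ (0 : ℝ), HasDerivAt eo (1 / 2 * ((Qtil t).2 ⬝ᵥ w t)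
      + 1 / 2 * (ko * (Eo t * Δo t + 1)) * (eo t * (2 - eo t))) t := fun t ht => by
    rw [← hunit t ht, funext heo]
    refine ((hasDerivAt_scalar_part (hQder t ht)).const_sub 1).congr_deriv ?_
    simp only [qmul, qpure, hr, hφ, Prod.smul_fst, dotProduct_add, dotProduct_smul, smul_eq_mul]
    ring
  have hJt : Jᵀ = J := by
    simpa only [Matrix.conjTranspose_eq_transpose_of_trivial] using hJ.isHermitian.eq
  have hKder : ∀ t ≥ (0 : ℝ), HasDerivAt (fun u => 1 / 2 * (w u ⬝ᵥ J *ᵥ w u))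
      (γo * (Eo t * Δo t + 1) * ((Qtil t).2 ⬝ᵥ w t)) t := fun t ht => by
    have hJder : HasDerivAt (fun u => J *ᵥ w u) (J *ᵥ w' t) t :=
      (Matrix.mulVecLin J).toContinuousLinearMap.hasFDerivAt.comp_hasDerivAt t (hwder t ht)
    refine ((hasDerivAt_dotProduct (hwder t ht) hJder).const_mul (1 / 2)).congr_deriv ?_
    have h := dotProduct_inertia_error hJt (hJw t ht)
    have hsymm : w' t ⬝ᵥ J *ᵥ w t = w t ⬝ᵥ J *ᵥ w' t := by
      rw [Matrix.dotProduct_mulVec, ← Matrix.mulVec_transpose, hJt, dotProduct_comm]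
    rw [hsymm, h, smul_dotProduct, smul_eq_mul]
    ring
  obtain ⟨m, hm, hcoer⟩ := exists_mul_norm_sq_le_of_posDef hJ
  have hnormK (t : ℝ) : ‖w t‖ ^ 2 ≤ 2 / m * (1 / 2 * (w t ⬝ᵥ J *ᵥ w t)) := by
    rw [show 2 / m * (1 / 2 * (w t ⬝ᵥ J *ᵥ w t)) = (w t ⬝ᵥ J *ᵥ w t) / m by ring,
      le_div_iff₀ hm, mul_comm]
    exact hcoer (w t)
  have hp : ∀ t ≥ (0 : ℝ),
      ((Qtil t).2 ⬝ᵥ w t) ^ 2 ≤ 3 * (2 / m) * (1 / 2 * (w t ⬝ᵥ J *ᵥ w t)) := fun t ht => by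
    have hcs : ((Qtil t).2 ⬝ᵥ w t) ^ 2 ≤ ((Qtil t).2 ⬝ᵥ (Qtil t).2) * (w t ⬝ᵥ w t) := by
      simpa only [dotProduct, sq] using
        Finset.sum_mul_sq_le_sq_mul_sq Finset.univ (Qtil t).2 (w t)
    have hv1 : (Qtil t).2 ⬝ᵥ (Qtil t).2 ≤ 1 := by
      rw [hunit t ht]
      nlinarith [sq_nonneg (eo t - 1)]
    have hww : 0 ≤ w t ⬝ᵥ w t := Finset.sum_nonneg fun i _ => mul_self_nonneg _
    nlinarith [hnormK t, dotProduct_self_le_three_mul_norm_sq (w t)]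
  have hξder : ∀ t ≥ (0 : ℝ),
      HasDerivAt ξo ((ξo0 - ξoInf) * (Real.exp (-ℓo * t) * -ℓo)) t := fun t _ => by
    rw [funext hξo]
    simpa using (((hasDerivAt_id t).const_mul (-ℓo)).exp.const_mul (ξo0 - ξoInf)).add_const ξoInf
  have hexp : ∀ t ≥ (0 : ℝ), Real.exp (-ℓo * t) ≤ 1 := fun t ht =>
    Real.exp_le_one_iff.mpr (by nlinarith)
  obtain ⟨⟨ME, hME⟩, ⟨Mφ, hMφ⟩, ⟨MK, hMK⟩, hetend, hEtend⟩ :=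
    performance_error_convergence (ξmin := ξoInf) (ξmax := ξo0) (B := 3 * (2 / m))
      (p := fun t => (Qtil t).2 ⬝ᵥ w t) hko0 hγo hδo hξ2 hξder
      (fun t _ => by
        have := mul_pos (mul_pos (sub_pos.mpr hξ1) (Real.exp_pos (-ℓo * t))) hℓo
        linarith)
      (fun t _ => by
        rw [hξo]
        linarith [mul_pos (sub_pos.mpr hξ1) (Real.exp_pos (-ℓo * t))])
      (fun t ht => by
        rw [hξo]
        linarith [mul_le_mul_of_nonneg_left (hexp t ht) (sub_pos.mpr hξ1).le])
      hEo hΔo heder hKder hp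
      (fun t _ => by
        have := (mul_nonneg hm.le (sq_nonneg ‖w t‖)).trans (hcoer (w t))
        linarith)
      (by positivity) (fun t ht => (hcon t ht).1) he1 (fun t ht => (hcon t ht).2)
  -- Boundedness and convergence of the vector-valued signals
  obtain ⟨C, hC⟩ := hΩbdd
  have hwbd : ∀ t ≥ (0 : ℝ), ‖w t‖ ≤ √(2 / m * MK) := fun t ht =>
    Real.le_sqrt_of_sq_le ((hnormK t).trans (by gcongr; exact hMK t ht))
  have hΩbd : ∀ t ≥ (0 : ℝ), ‖Ω t‖ ≤ C := fun t ht => (norm_le_vnorm _).trans (hC t ht)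
  have hvtend : Tendsto (fun t => (Qtil t).2) atTop (nhds 0) := by
    have hsqrt : Tendsto (fun t => √(eo t * (2 - eo t))) atTop (nhds 0) := by
      simpa using (hetend.mul (hetend.const_sub 2)).sqrt
    refine squeeze_zero_norm' ?_ hsqrt
    filter_upwards [eventually_ge_atTop 0] with t ht
    rw [← hunit t ht]
    exact norm_le_vnorm _
  have hstend : Tendsto (fun t => (Qtil t).1) atTop (nhds 1) := by
    have h := hetend.const_sub 1
    simpa [heo] using h
  have hφv (c : ℝ) : Tendsto (fun t => (c * φ t) • (Qtil t).2) atTop (nhds 0) := by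
    refine squeeze_zero_norm' (a := fun t => |c| * Mφ * ‖(Qtil t).2‖) ?_
      (by simpa using hvtend.norm.const_mul (|c| * Mφ))
    filter_upwards [eventually_ge_atTop 0] with t ht
    rw [norm_smul, norm_mul, Real.norm_eq_abs, Real.norm_eq_abs]
    gcongr
    exact hMφ t ht
  have hv1 : ∀ t ≥ (0 : ℝ), ‖(Qtil t).2‖ ≤ 1 := fun t ht => by
    refine (norm_le_vnorm _).trans (Real.sqrt_le_one.mpr ?_)
    rw [hunit t ht]
    nlinarith [sq_nonneg (eo t - 1)]
  obtain ⟨L, hL⟩ := exists_norm_le_of_inertia_error hJ (max (max C √(2 / m * MK)) (γo * Mφ))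
  have hw'bd : ∀ t ≥ (0 : ℝ), ‖w' t‖ ≤ L := fun t ht =>
    hL _ _ _ _ ((hΩbd t ht).trans ((le_max_left _ _).trans (le_max_left _ _)))
      ((hwbd t ht).trans ((le_max_right _ _).trans (le_max_left _ _)))
      (by
        refine le_trans ?_ (le_max_right _ _)
        have h0 : |φ t| ≤ Mφ := hMφ t ht
        have h1 : 0 ≤ γo * Mφ := mul_nonneg hγo.le ((abs_nonneg _).trans h0)
        rw [norm_smul, norm_mul, Real.norm_eq_abs, Real.norm_eq_abs, abs_of_pos hγo]
        calc γo * |φ t| * ‖(Qtil t).2‖ ≤ γo * Mφ * 1 := by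
              gcongr
              exact hv1 t ht
          _ = γo * Mφ := mul_one _)
      (hJw t ht)
  refine ⟨⟨⟨ME, hME⟩, ⟨1, fun t ht => ?_⟩, ⟨√(3 * (C + √(2 / m * MK)) ^ 2), fun t ht => ?_⟩⟩,
    hEtend, hetend, hvtend, hstend,
    tendsto_zero_of_quaternion_kinematics hQder hstend hvtend (hφv ko) hwder hwbd hw'bd⟩
  · rw [abs_of_nonneg (hcon t ht).1]
    exact he1 t ht
  · have hrot : Ωh t ⬝ᵥ Ωh t = (Ω t - w t) ⬝ᵥ (Ω t - w t) := by
      rw [← hy, Matrix.dotProduct_mulVec, Matrix.vecMul_transpose, Matrix.mulVec_mulVec,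
        rotQ_mul_transpose (hU t ht), Matrix.one_mulVec]
    rw [vnorm, hrot]
    refine Real.sqrt_le_sqrt ((dotProduct_self_le_three_mul_norm_sq _).trans ?_)
    gcongr
    exact (norm_sub_le _ _).trans (add_le_add (hΩbd t ht) (hwbd t ht))
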